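/- Let P be a set of primes and, for each p ∈ P, let τ_p : {0,…,p−1} → ℂ be a function. Then for every finitely supported ϖ : ℤ → ℂ, ∑_{k ∈ ℤ} ∑_{p ∈ P} | (1/p) ∑_{0 ≤ n < p} τ_p(n) ϖ(n+k) |² ≤ ( ∑_{p ∈ P} ( sup_{θ ∈ [0,1]} | (1/p) ∑_{0 ≤ n < p} τ_p(n) e(nθ) | )² ) · ∑_{k ∈ ℤ} |ϖ(k)|². -/

import Mathlib

open Filter MeasureTheory ENNReal

/-- `e(z) = exp(2πiz)`. -/
noncomputable def e (z : ℝ) : ℂ := Complex.exp (2 * Real.pi * Complex.I * z)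

section helpers

local instance factOnePos : Fact ((0:ℝ) < 1) := ⟨one_pos⟩

noncomputable def trigPoly (S : Finset ℤ) (a : ℤ → ℂ) : C(AddCircle (1:ℝ), ℂ) :=
  ∑ k ∈ S, a k • fourier k

theorem trigPoly_apply (S : Finset ℤ) (a : ℤ → ℂ) (x : AddCircle (1:ℝ)) :
    trigPoly S a x = ∑ k ∈ S, a k * fourier k x := by
  simp [trigPoly, ContinuousMap.sum_apply]

noncomputable def toL2 (f : C(AddCircle (1:ℝ), ℂ)) :
    Lp ℂ 2 (AddCircle.haarAddCircle (T := (1:ℝ))) :=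
  ContinuousMap.toLp (E := ℂ) 2 AddCircle.haarAddCircle ℂ f

theorem norm_toL2_trigPoly (S : Finset ℤ) (a : ℤ → ℂ) :
    ‖toL2 (trigPoly S a)‖ ^ 2 = ∑ k ∈ S, ‖a k‖ ^ 2 := by
  have h1 : toL2 (trigPoly S a) = ∑ k ∈ S, a k • fourierLp (T := (1:ℝ)) 2 k := by
    unfold toL2 trigPoly
    rw [map_sum]
    simp only [map_smul]
  have h2 := (orthonormal_fourier (T := (1:ℝ))).inner_sum a a S
  rw [← h1, inner_self_eq_norm_sq_to_K] at h2
  simp only [RCLike.conj_mul] at h2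
  exact_mod_cast h2

theorem norm_toL2_le (F G : C(AddCircle (1:ℝ), ℂ)) (C : ℝ)
    (h : ∀ x, ‖G x‖ ≤ C * ‖F x‖) : ‖toL2 G‖ ≤ C * ‖toL2 F‖ := by
  apply Lp.norm_le_mul_norm_of_ae_le_mul
  unfold toL2
  filter_upwards [ContinuousMap.coeFn_toLp (p := 2) (𝕜 := ℂ) AddCircle.haarAddCircle F,
    ContinuousMap.coeFn_toLp (p := 2) (𝕜 := ℂ) AddCircle.haarAddCircle G] with x h1 h2
  rw [h1, h2]
  exact h x

theorem fourier_e (n : ℕ) (θ : ℝ) (x : AddCircle (1:ℝ)) (h : (θ : AddCircle (1:ℝ)) = -x) :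
    fourier (-(n:ℤ)) x = e (n * θ) := by
  have : fourier (-(n:ℤ)) x = fourier (n:ℤ) (θ : AddCircle (1:ℝ)) := by
    rw [h]; simp [fourier_apply]
  rw [this, fourier_coe_apply, e]
  congr 1
  push_cast
  ring

theorem shift_sum (S T : Finset ℤ) (ϖ : ℤ → ℂ) (hS : ∀ k, ϖ k ≠ 0 → k ∈ S) (n : ℤ)
    (hT : ∀ k, ϖ (n + k) ≠ 0 → k ∈ T) (x : AddCircle (1:ℝ)) :
    ∑ k ∈ T, ϖ (n + k) * fourier k x = fourier (-n) x * ∑ k ∈ S, ϖ k * fourier k x := by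
  rw [← tsum_eq_sum (L := .unconditional ℤ) (s := T) (f := fun k => ϖ (n + k) * fourier k x),
    ← tsum_eq_sum (L := .unconditional ℤ) (s := S) (f := fun k => ϖ k * fourier k x),
    ← (Equiv.addLeft n).tsum_eq (fun k => ϖ k * fourier k x), ← tsum_mul_left]
  · congr 1
    ext k
    have : (fourier k x : ℂ) = fourier (-n) x * fourier (n + k) x := by
      rw [← fourier_add]; congr 2; ring
    simp only [Equiv.coe_addLeft]
    rw [this]; ring
  · intro k hk
    by_contra h
    exact hk (hS k (left_ne_zero_of_mul h))
  · intro k hk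
    by_contra h
    exact hk (hT k (left_ne_zero_of_mul h))

theorem single_bound (p : ℕ) (t : ℕ → ℂ) (ϖ : ℤ → ℂ) (hϖ : (Function.support ϖ).Finite) :
    ∑' k : ℤ, ENNReal.ofReal
          (‖(p : ℂ)⁻¹ * ∑ n ∈ Finset.range p, t n * ϖ ((n : ℤ) + k)‖ ^ 2)
      ≤ (⨆ θ ∈ Set.Icc (0:ℝ) 1, ENNReal.ofReal
              ‖(p : ℂ)⁻¹ * ∑ n ∈ Finset.range p, t n * e ((n : ℝ) * θ)‖) ^ 2
          * ∑' k : ℤ, ENNReal.ofReal (‖ϖ k‖ ^ 2) := by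
  classical
  set A := ⨆ θ ∈ Set.Icc (0:ℝ) 1, ENNReal.ofReal
              ‖(p : ℂ)⁻¹ * ∑ n ∈ Finset.range p, t n * e ((n : ℝ) * θ)‖ with hA
  have he : ∀ z, ‖e z‖ = 1 := by
    intro z
    have : (2 * Real.pi * Complex.I * z : ℂ) = ((2 * Real.pi * z : ℝ) : ℂ) * Complex.I := by
      push_cast; ring
    rw [e, this, Complex.norm_exp_ofReal_mul_I]
  have hfin : A ≠ ⊤ := by
    refine ne_top_of_le_ne_top (b := ENNReal.ofReal (‖(p : ℂ)⁻¹‖ * ∑ n ∈ Finset.range p, ‖t n‖))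
      ENNReal.ofReal_ne_top (iSup₂_le fun θ _ => ENNReal.ofReal_le_ofReal ?_)
    rw [norm_mul]
    gcongr
    refine (norm_sum_le _ _).trans (le_of_eq ?_)
    simp [he]
  set S := hϖ.toFinset with hSdef
  have hS : ∀ k, ϖ k ≠ 0 → k ∈ S := fun k hk => by simpa [hSdef] using hk
  set T : Finset ℤ := (S ×ˢ Finset.range p).image (fun q => q.1 - (q.2 : ℤ)) with hTdef
  have hT : ∀ n ∈ Finset.range p, ∀ k, ϖ ((n:ℤ) + k) ≠ 0 → k ∈ T := fun n hn k hk => by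
    rw [hTdef, Finset.mem_image]
    exact ⟨((n:ℤ) + k, n), Finset.mem_product.2 ⟨hS _ hk, hn⟩, by simp⟩
  set b : ℤ → ℂ := fun k => (p : ℂ)⁻¹ * ∑ n ∈ Finset.range p, t n * ϖ ((n : ℤ) + k) with hb
  have hbT : ∀ k, k ∉ T → b k = 0 := by
    intro k hk
    simp only [hb]
    rw [Finset.sum_eq_zero, mul_zero]
    intro n hn
    by_contra h
    exact hk (hT n hn k (right_ne_zero_of_mul h))
  have key : ∀ x, ‖trigPoly T b x‖ ≤ A.toReal * ‖trigPoly S ϖ x‖ := by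
    intro x
    obtain ⟨θ, hθ, hx⟩ : ∃ θ ∈ Set.Icc (0:ℝ) 1, (θ : AddCircle (1:ℝ)) = -x := by
      have := AddCircle.coe_image_Icc_eq (1:ℝ) 0
      have h2 : -x ∈ (QuotientAddGroup.mk '' Set.Icc (0:ℝ) (0 + 1) : Set (AddCircle (1:ℝ))) := by
        rw [this]; trivial
      obtain ⟨θ, hθ, h⟩ := h2
      exact ⟨θ, by simpa using hθ, h⟩
    have h1 : trigPoly T b x = ((p : ℂ)⁻¹ * ∑ n ∈ Finset.range p, t n * e ((n : ℝ) * θ))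
        * trigPoly S ϖ x := by
      rw [trigPoly_apply, trigPoly_apply]
      simp only [hb, Finset.mul_sum, Finset.sum_mul]
      rw [Finset.sum_comm]
      rw [Finset.sum_comm (s := S)]
      refine Finset.sum_congr rfl fun n hn => ?_
      have := shift_sum S T ϖ hS n (hT n hn) x
      rw [fourier_e n θ x hx] at this
      calc _ = (p : ℂ)⁻¹ * t n * ∑ k ∈ T, ϖ (n + k) * fourier k x := by
            rw [Finset.mul_sum]; refine Finset.sum_congr rfl fun k _ => by ring
        _ = _ := by
            rw [this, ← mul_assoc, Finset.mul_sum]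
            refine Finset.sum_congr rfl fun k _ => by ring
    rw [h1, norm_mul]
    gcongr
    rw [← ENNReal.ofReal_le_iff_le_toReal hfin]
    exact le_iSup₂_of_le θ hθ le_rfl
  have h3 := norm_toL2_le _ _ _ key
  have h4 : ∑ k ∈ T, ‖b k‖ ^ 2 ≤ A.toReal ^ 2 * ∑ k ∈ S, ‖ϖ k‖ ^ 2 := by
    rw [← norm_toL2_trigPoly, ← norm_toL2_trigPoly, ← mul_pow]
    gcongr
  rw [tsum_eq_sum (s := T) (fun k hk => by
      change ENNReal.ofReal (‖b k‖ ^ 2) = 0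
      simp [hbT k hk]),
    tsum_eq_sum (s := S) (fun k hk => by
      have : ϖ k = 0 := by by_contra h; exact hk (hS k h)
      simp [this]),
    ← ENNReal.ofReal_sum_of_nonneg (fun _ _ => by positivity),
    ← ENNReal.ofReal_sum_of_nonneg (fun _ _ => by positivity)]
  conv_rhs => rw [← ENNReal.ofReal_toReal hfin]
  rw [← ENNReal.ofReal_pow (by positivity), ← ENNReal.ofReal_mul (by positivity)]
  exact ENNReal.ofReal_le_ofReal h4

end helpers

/-- For every finitely supported `ϖ : ℤ → ℂ`,
`∑_{k∈ℤ} ∑_{p∈P} |(1/p) ∑_{0≤n<p} τ_p(n) ϖ(n+k)|²` is at most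
`(∑_{p∈P} (sup_{θ∈[0,1]} |(1/p) ∑_{0≤n<p} τ_p(n) e(nθ)|)²) · ∑_{k∈ℤ} |ϖ(k)|²`. -/
theorem fourier_maximal_bound
    (P : Set ℕ) (hPprime : ∀ p ∈ P, p.Prime) (τ : ℕ → ℕ → ℂ)
    (ϖ : ℤ → ℂ) (hϖ : (Function.support ϖ).Finite) :
    ∑' k : ℤ, ∑' p : P,
        ENNReal.ofReal
          (‖((p : ℕ) : ℂ)⁻¹ * ∑ n ∈ Finset.range (p : ℕ), τ p n * ϖ ((n : ℤ) + k)‖ ^ 2)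
      ≤ (∑' p : P,
            (⨆ θ ∈ Set.Icc (0:ℝ) 1, ENNReal.ofReal
              ‖((p : ℕ) : ℂ)⁻¹ * ∑ n ∈ Finset.range (p : ℕ), τ p n * e ((n : ℝ) * θ)‖) ^ 2)
          * ∑' k : ℤ, ENNReal.ofReal (‖ϖ k‖ ^ 2) := by
  rw [ENNReal.tsum_comm, ← ENNReal.tsum_mul_right]
  exact ENNReal.tsum_le_tsum fun p => single_bound p (τ p) ϖ hϖ
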